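/- Let v be a norm on ℝ^n invariant under coordinate permutations. Then d_v(X,Y) := ‖log(X^{-1/2} Y X^{-1/2})‖_v defines a metric on the set P_n of n×n positive definite Hermitian matrices, the resulting metric space (P_n, d_v) is complete, and d_v(X,Y) = d_v(I, X^{-1/2} Y X^{-1/2}) for all X, Y ∈ P_n. -/

import Mathlib

noncomputable section
open scoped Classical
open Matrix
open scoped ComplexOrder

/-- `v(λ(H))` for Hermitian `H` (junk value `0` otherwise). -/
def vnorm {n : ℕ} (v : (Fin n → ℝ) → ℝ) (H : Matrix (Fin n) (Fin n) ℂ) : ℝ :=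
  if h : H.IsHermitian then v h.eigenvalues else 0

/-- The positive semidefinite square root (junk value `0` off PSD matrices). -/
def matSqrt {n : ℕ} (X : Matrix (Fin n) (Fin n) ℂ) : Matrix (Fin n) (Fin n) ℂ :=
  if h : X.PosSemidef then
    (h.1.eigenvectorUnitary : Matrix (Fin n) (Fin n) ℂ) *
      Matrix.diagonal ((↑) ∘ Real.sqrt ∘ h.1.eigenvalues) *
      (star h.1.eigenvectorUnitary : Matrix (Fin n) (Fin n) ℂ)
  else 0

/-- The Hermitian logarithm of a positive definite matrix, via the spectral
decomposition (junk value `0` off Hermitian matrices). For positive definite `X` this is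
the unique Hermitian matrix whose exponential is `X`. -/
def mlog {n : ℕ} (X : Matrix (Fin n) (Fin n) ℂ) : Matrix (Fin n) (Fin n) ℂ :=
  if h : X.IsHermitian then
    (h.eigenvectorUnitary : Matrix (Fin n) (Fin n) ℂ) *
      Matrix.diagonal (fun i => (Real.log (h.eigenvalues i) : ℂ)) *
      (star h.eigenvectorUnitary : Matrix (Fin n) (Fin n) ℂ)
  else 0

/-- The invariant Finsler distance `d_v(X,Y) = ‖log (X^{-1/2} Y X^{-1/2})‖_v`. -/
def dv {n : ℕ} (v : (Fin n → ℝ) → ℝ) (X Y : Matrix (Fin n) (Fin n) ℂ) : ℝ :=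
  vnorm v (mlog ((matSqrt X)⁻¹ * Y * (matSqrt X)⁻¹))


/-! ### Real part -/

lemma abel_aux (m : ℕ) (w z : ℕ → ℝ) (hw : ∀ i < m, w (i+1) ≤ w i)
    (hz : ∀ k ≤ m, 0 ≤ ∑ i ∈ Finset.range (k+1), z i) :
    w m * ∑ i ∈ Finset.range (m+1), z i ≤ ∑ i ∈ Finset.range (m+1), w i * z i := by
  induction m with
  | zero => simp
  | succ m ih =>
    rw [Finset.sum_range_succ _ (m+1), Finset.sum_range_succ (fun i => w i * z i) (m+1), mul_add]
    have h1 := ih (fun i hi => hw i (by omega)) (fun k hk => hz k (by omega))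
    have h2 := mul_le_mul_of_nonneg_right (hw m (by omega)) (hz m (by omega))
    linarith

lemma abel_fin {n : ℕ} (w x y : Fin n → ℝ) (hw : Antitone w)
    (hle : ∀ j, ∑ i with i ≤ j, x i ≤ ∑ i with i ≤ j, y i) (heq : ∑ i, x i = ∑ i, y i) :
    ∑ i, w i * x i ≤ ∑ i, w i * y i := by
  rcases n with _ | m
  · simp
  let W : ℕ → ℝ := fun i => if h : i < m+1 then w ⟨i, h⟩ else 0
  let Z : ℕ → ℝ := fun i => if h : i < m+1 then y ⟨i, h⟩ - x ⟨i, h⟩ else 0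
  have key := abel_aux m W Z ?_ ?_
  · rw [← Fin.sum_univ_eq_sum_range, ← Fin.sum_univ_eq_sum_range (fun i => W i * Z i)] at key
    simp only [W, Z, Fin.is_lt, dite_true, Fin.eta, Finset.sum_sub_distrib, mul_sub] at key
    rw [heq] at key
    simp at key
    linarith
  · intro i hi
    simp only [W]
    rw [dif_pos (by omega), dif_pos (by omega)]
    exact hw (by simp)
  · intro k hk
    have h := hle ⟨k, by omega⟩
    have h3 : ∑ i ∈ Finset.range (k+1), Z i = ∑ i : Fin (m+1) with i ≤ ⟨k, by omega⟩, (y i - x i) := by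
      symm
      refine Finset.sum_bij (fun i _ => i.val) ?_ ?_ ?_ ?_
      · intro a ha
        simp [Fin.le_def] at ha ⊢
        omega
      · intro a _ b _ h
        exact Fin.ext h
      · intro b hb
        simp at hb
        exact ⟨⟨b, by omega⟩, by simp [Fin.le_def]; omega, rfl⟩
      · intro a ha
        simp only [Z, Fin.is_lt, dite_true, Fin.eta]
    rw [h3, Finset.sum_sub_distrib]
    linarith

lemma exists_antitone_perm {n : ℕ} (f : Fin n → ℝ) : ∃ σ : Equiv.Perm (Fin n), Antitone (f ∘ σ) := by
  refine ⟨Tuple.sort (-f), ?_⟩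
  intro a b hab
  have := Tuple.monotone_sort (-f) hab
  simpa using this

lemma perm_of_multiset {n : ℕ} (f g : Fin n → ℝ)
    (h : Multiset.map f Finset.univ.val = Multiset.map g Finset.univ.val) :
    ∃ σ : Equiv.Perm (Fin n), f = g ∘ σ := by
  have h1 : (List.ofFn f).Perm (List.ofFn g) := by
    rw [← Multiset.coe_eq_coe]
    simpa [Fin.univ_def, List.ofFn_eq_map] using h
  have h2 : (List.ofFn (f ∘ Tuple.sort f)).Perm (List.ofFn (g ∘ Tuple.sort g)) :=
    ((Equiv.Perm.ofFn_comp_perm _ f).trans h1).trans (Equiv.Perm.ofFn_comp_perm _ g).symm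
  have h3 := h2.eq_of_pairwise' (Tuple.monotone_sort f).sortedLE_ofFn.pairwise (Tuple.monotone_sort g).sortedLE_ofFn.pairwise
  have h4 := List.ofFn_injective h3
  refine ⟨(Tuple.sort f).symm.trans (Tuple.sort g), ?_⟩
  funext i
  have := congrFun h4 ((Tuple.sort f).symm i)
  simpa using this

lemma v_major {n : ℕ} (v : (Fin n → ℝ) → ℝ)
    (hv_smul : ∀ (c : ℝ) (x : Fin n → ℝ), v (c • x) = |c| * v x)
    (hv_add : ∀ x y, v (x + y) ≤ v x + v y)
    (hv_perm : ∀ (σ : Equiv.Perm (Fin n)) (x : Fin n → ℝ), v (x ∘ σ) = v x)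
    (x y : Fin n → ℝ) (hx : Antitone x)
    (hle : ∀ j, ∑ i with i ≤ j, x i ≤ ∑ i with i ≤ j, y i) (heq : ∑ i, x i = ∑ i, y i) :
    v x ≤ v y := by
  have hcv : ConvexOn ℝ Set.univ v := by
    refine ⟨convex_univ, ?_⟩
    intro a _ b _ s t hs ht _
    refine (hv_add _ _).trans ?_
    rw [hv_smul, hv_smul, abs_of_nonneg hs, abs_of_nonneg ht]
    rfl
  let S : Set (Fin n → ℝ) := Set.range (fun σ : Equiv.Perm (Fin n) => y ∘ σ)
  have hmem : x ∈ convexHull ℝ S := by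
    by_contra hnot
    obtain ⟨f, u, hf1, hf2⟩ := geometric_hahn_banach_closed_point (convex_convexHull ℝ S)
      ((Set.finite_range _).isClosed_convexHull ℝ) hnot
    let w : Fin n → ℝ := fun i => f (Pi.single i 1)
    have hf : ∀ z : Fin n → ℝ, f z = ∑ i, w i * z i := by
      intro z
      conv_lhs => rw [pi_eq_sum_univ' z]
      rw [map_sum]
      refine Finset.sum_congr rfl fun i _ => ?_
      rw [map_smul, smul_eq_mul, mul_comm]
    obtain ⟨σ, hσ⟩ := exists_antitone_perm w
    have h1 := hf1 (y ∘ σ.symm) (subset_convexHull ℝ S ⟨σ.symm, rfl⟩)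
    rw [hf] at h1 hf2
    have h2 : ∑ i, w i * x i = ∑ i, (w ∘ σ) i * x (σ i) :=
      (Equiv.sum_comp σ (fun i => w i * x i)).symm
    have h3 : ∑ i, w i * (y ∘ σ.symm) i = ∑ i, (w ∘ σ) i * y i := by
      rw [← Equiv.sum_comp σ (fun i => w i * (y ∘ σ.symm) i)]
      simp
    have h4 : ∑ i, (w ∘ σ) i * x (σ i) ≤ ∑ i, (w ∘ σ) i * x i :=
      (hσ.monovary hx).sum_mul_comp_perm_le_sum_mul
    have h5 := abel_fin (w ∘ σ) x y hσ hle heq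
    linarith
  obtain ⟨_, ⟨σ, rfl⟩, h⟩ := hcv.exists_ge_of_mem_convexHull (Set.subset_univ _) hmem
  exact h.trans (hv_perm σ y).le

lemma v_bounds {n : ℕ} (v : (Fin n → ℝ) → ℝ)
    (hv_eq0 : ∀ x, v x = 0 ↔ x = 0)
    (hv_smul : ∀ (c : ℝ) (x : Fin n → ℝ), v (c • x) = |c| * v x)
    (hv_add : ∀ x y, v (x + y) ≤ v x + v y) :
    ∃ C > 0, (∀ x, v x ≤ C * ‖x‖) ∧ (∀ x, ‖x‖ ≤ C * v x) := by
  have hcv : ConvexOn ℝ Set.univ v := by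
    refine ⟨convex_univ, ?_⟩
    intro a _ b _ s t hs ht _
    refine (hv_add _ _).trans ?_
    rw [hv_smul, hv_smul, abs_of_nonneg hs, abs_of_nonneg ht]
    rfl
  have hcont : Continuous v := by
    rw [← continuousOn_univ]
    exact hcv.continuousOn isOpen_univ
  have hv0 : v 0 = 0 := (hv_eq0 0).2 rfl
  have hnn : ∀ x, 0 ≤ v x := by
    intro x
    have h1 := hv_add x ((-1 : ℝ) • x)
    rw [hv_smul] at h1
    simp [hv0] at h1
    linarith
  have hK : IsCompact (Metric.sphere (0 : Fin n → ℝ) 1) := isCompact_sphere _ _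
  obtain hE | hne := (Metric.sphere (0 : Fin n → ℝ) 1).eq_empty_or_nonempty
  · have hz : ∀ x : Fin n → ℝ, x = 0 := by
      intro x
      by_contra hx
      have : (‖x‖⁻¹ • x) ∈ Metric.sphere (0 : Fin n → ℝ) 1 := by
        simp [norm_smul, norm_ne_zero_iff.2 hx]
      rw [hE] at this
      exact this
    refine ⟨1, one_pos, ?_, ?_⟩ <;> intro x <;> rw [hz x] <;> simp [hv0]
  obtain ⟨a, ha, hmin⟩ := hK.exists_isMinOn hne hcont.continuousOn
  obtain ⟨b, hb, hmax⟩ := hK.exists_isMaxOn hne hcont.continuousOn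
  have hapos : 0 < v a := by
    refine lt_of_le_of_ne (hnn a) fun h => ?_
    rw [(hv_eq0 a).1 h.symm] at ha
    simp at ha
  have hbn := hnn b
  have hsc : ∀ x : Fin n → ℝ, x ≠ 0 → v a * ‖x‖ ≤ v x ∧ v x ≤ v b * ‖x‖ := by
    intro x hx
    have hp := norm_pos_iff.2 hx
    have hm : (‖x‖⁻¹ • x) ∈ Metric.sphere (0 : Fin n → ℝ) 1 := by
      simp [norm_smul, norm_ne_zero_iff.2 hx]
    have h1 : v a ≤ v (‖x‖⁻¹ • x) := hmin hm
    have h2 : v (‖x‖⁻¹ • x) ≤ v b := hmax hm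
    rw [hv_smul, abs_of_pos (inv_pos.2 hp), inv_mul_eq_div] at h1 h2
    exact ⟨(le_div_iff₀ hp).1 h1, (div_le_iff₀ hp).1 h2⟩
  refine ⟨v b + (v a)⁻¹, by positivity, ?_, ?_⟩
  · intro x
    by_cases hx : x = 0
    · simp [hx, hv0]
    · have := (hsc x hx).2
      have h3 : 0 ≤ (v a)⁻¹ * ‖x‖ := by positivity
      linarith
  · intro x
    by_cases hx : x = 0
    · simp [hx, hv0]
    · have := (hsc x hx).1
      have h3 : 0 ≤ v b * v x := mul_nonneg hbn (hnn x)
      have h4 : ‖x‖ ≤ (v a)⁻¹ * v x := by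
        rw [inv_mul_eq_div, le_div_iff₀ hapos]; linarith
      linarith

/-! ### Determinant part -/

lemma one_le_det_one_add {κ : Type*} [Fintype κ] [DecidableEq κ] (P : Matrix κ κ ℂ)
    (hP : P.PosSemidef) : 1 ≤ (1 + P).det := by
  have h := hP.1.spectral_theorem
  rw [Unitary.conjStarAlgAut_apply] at h
  have hU : (hP.1.eigenvectorUnitary : Matrix κ κ ℂ) *
    (star hP.1.eigenvectorUnitary : Matrix κ κ ℂ) = 1 := by simp
  have h2 : 1 + P = (hP.1.eigenvectorUnitary : Matrix κ κ ℂ) *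
      diagonal (fun i => ((1 + hP.1.eigenvalues i : ℝ) : ℂ)) *
      (star hP.1.eigenvectorUnitary : Matrix κ κ ℂ) := by
    have h3 : diagonal (fun i => ((1 + hP.1.eigenvalues i : ℝ) : ℂ)) =
        (1 : Matrix κ κ ℂ) + diagonal (RCLike.ofReal ∘ hP.1.eigenvalues) := by
      rw [← diagonal_one, diagonal_add]
      congr 1
      ext i
      simp
    rw [h3, mul_add, add_mul, mul_one, hU]
    congr 1
  have h4 : (hP.1.eigenvectorUnitary : Matrix κ κ ℂ).det *
    (star hP.1.eigenvectorUnitary : Matrix κ κ ℂ).det = 1 := by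
    rw [← det_mul, hU, det_one]
  rw [h2, det_mul, det_mul, mul_right_comm, h4, one_mul, det_diagonal, ← Complex.ofReal_prod]
  have : (1 : ℝ) ≤ ∏ i, (1 + hP.1.eigenvalues i) := by
    have := Finset.prod_le_prod (s := Finset.univ) (f := fun _ : κ => (1 : ℝ))
      (g := fun i => 1 + hP.1.eigenvalues i) (fun _ _ => zero_le_one)
      (fun i _ => by have := hP.eigenvalues_nonneg i; linarith)
    simpa using this
  exact_mod_cast this

lemma det_add_conj {κ ι : Type*} [Fintype κ] [DecidableEq κ] [Fintype ι] [DecidableEq ι]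
    (A : Matrix κ κ ℂ) (hA : A.PosDef) (V : Matrix ι κ ℂ) :
    (A + Vᴴ * V).det = A.det * (1 + V * A⁻¹ * Vᴴ).det := by
  have hu : IsUnit A.det := (isUnit_iff_isUnit_det A).1 hA.isUnit
  have h1 : A + Vᴴ * V = A * (1 + (A⁻¹ * Vᴴ) * V) := by
    rw [Matrix.mul_add, Matrix.mul_one, ← Matrix.mul_assoc, ← Matrix.mul_assoc, mul_nonsing_inv _ hu,
      Matrix.one_mul]
  rw [h1, det_mul, det_one_add_mul_comm, Matrix.mul_assoc V]

lemma det_mono {κ : Type*} [Fintype κ] [DecidableEq κ] (A B : Matrix κ κ ℂ)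
    (hA : A.PosDef) (hB : B.PosSemidef) : A.det ≤ (A + B).det := by
  obtain ⟨V, rfl⟩ : ∃ V : Matrix κ κ ℂ, B = Vᴴ * V := by
    open scoped MatrixOrder in
    obtain ⟨V, hV⟩ := CStarAlgebra.nonneg_iff_eq_star_mul_self.1 hB.nonneg
    exact ⟨V, hV⟩
  rw [det_add_conj A hA V]
  have h1 := one_le_det_one_add (V * A⁻¹ * Vᴴ) (hA.inv.posSemidef.mul_mul_conjTranspose_same V)
  calc A.det = A.det * 1 := (mul_one _).symm
    _ ≤ _ := mul_le_mul_of_nonneg_left h1 hA.det_pos.le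

lemma det_le_diag {n : ℕ} {p : Fin n → Prop} [DecidablePred p] (W : Matrix (Fin n) {i // p i} ℂ)
    (hW : Function.Injective W.mulVec) (d : Fin n → ℝ) (hd : ∀ i, 0 < d i) (c : ℝ) (hc : 0 < c)
    (h1 : ∀ i, p i → c ≤ d i) (h2 : ∀ i, ¬ p i → d i ≤ c) :
    (Wᴴ * diagonal (fun i => (d i : ℂ)) * W).det ≤
      ((∏ i with p i, d i : ℝ) : ℂ) * (Wᴴ * W).det := by
  let e : Fin n → ℝ := fun i => if p i then d i / c - 1 else 0
  have he : ∀ i, 0 ≤ e i := by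
    intro i
    simp only [e]
    split_ifs with h
    · rw [sub_nonneg, le_div_iff₀ hc, one_mul]; exact h1 i h
    · exact le_rfl
  have hde : ∀ i, d i ≤ c * (1 + e i) := by
    intro i
    simp only [e]
    split_ifs with h
    · rw [add_sub_cancel, mul_div_cancel₀ _ hc.ne']
    · simpa using h2 i h
  have hprod : c ^ Fintype.card {i // p i} * ∏ i, (1 + e i) = ∏ i with p i, d i := by
    have : ∏ i, (1 + e i) = ∏ i with p i, (d i / c) := by
      rw [Finset.prod_filter]
      refine Finset.prod_congr rfl fun i _ => ?_
      simp only [e]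
      split_ifs <;> ring
    rw [this, Finset.prod_div_distrib, Finset.prod_const, Fintype.card_subtype]
    field_simp
  let Es : Matrix (Fin n) (Fin n) ℂ := diagonal (fun i => ((Real.sqrt (e i) : ℝ) : ℂ))
  have hEs : Esᴴ = Es := by
    simp only [Es, diagonal_conjTranspose]
    congr 1
    ext i
    simp
  have hEs2 : Es * Es = diagonal (fun i => (e i : ℂ)) := by
    simp only [Es, diagonal_mul_diagonal]
    congr 1
    ext i
    rw [← Complex.ofReal_mul, Real.mul_self_sqrt (he i)]
  have hG : (Wᴴ * W).PosDef := PosDef.conjTranspose_mul_self W hW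
  have hu : IsUnit (Wᴴ * W).det := (isUnit_iff_isUnit_det _).1 hG.isUnit
  have hD : (diagonal (fun i => (d i : ℂ)) : Matrix (Fin n) (Fin n) ℂ).PosDef := by
    rw [posDef_diagonal_iff]
    intro i
    exact_mod_cast hd i
  have hA := hD.conjTranspose_mul_mul_same hW
  have hB : (diagonal (fun i => ((c * (1 + e i) - d i : ℝ) : ℂ)) : Matrix (Fin n) (Fin n) ℂ).PosSemidef := by
    rw [posSemidef_diagonal_iff]
    intro i
    have := hde i
    exact_mod_cast sub_nonneg.2 this
  have step1 := det_mono _ _ hA (hB.conjTranspose_mul_mul_same W)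
  have hsum : Wᴴ * diagonal (fun i => (d i : ℂ)) * W +
      Wᴴ * diagonal (fun i => ((c * (1 + e i) - d i : ℝ) : ℂ)) * W =
      (c : ℂ) • (Wᴴ * W + (Es * W)ᴴ * (Es * W)) := by
    have : (diagonal (fun i => (d i : ℂ)) : Matrix (Fin n) (Fin n) ℂ) + diagonal (fun i => ((c * (1 + e i) - d i : ℝ) : ℂ)) =
      (c : ℂ) • (1 + Es * Es) := by
      rw [hEs2, diagonal_add, ← diagonal_one, diagonal_add, ← diagonal_smul]
      congr 1
      ext i
      simp
    rw [← Matrix.add_mul, ← Matrix.mul_add, this, conjTranspose_mul, hEs, Matrix.mul_smul,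
      Matrix.smul_mul]
    congr 1
    simp only [Matrix.mul_add, Matrix.add_mul, Matrix.mul_one, Matrix.mul_assoc]
  rw [hsum, det_smul, det_add_conj _ hG] at step1
  refine step1.trans ?_
  have hPi : (1 - W * (Wᴴ * W)⁻¹ * Wᴴ).PosSemidef := by
    have hH : (1 - W * (Wᴴ * W)⁻¹ * Wᴴ)ᴴ = 1 - W * (Wᴴ * W)⁻¹ * Wᴴ := by
      simp [conjTranspose_nonsing_inv, Matrix.mul_assoc]
    have hI : (W * (Wᴴ * W)⁻¹ * Wᴴ) * (W * (Wᴴ * W)⁻¹ * Wᴴ) = W * (Wᴴ * W)⁻¹ * Wᴴ := by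
      calc _ = W * (((Wᴴ * W)⁻¹ * (Wᴴ * W)) * ((Wᴴ * W)⁻¹ * Wᴴ)) := by
            simp only [Matrix.mul_assoc]
        _ = _ := by rw [nonsing_inv_mul _ hu, Matrix.one_mul, Matrix.mul_assoc]
    have : 1 - W * (Wᴴ * W)⁻¹ * Wᴴ = (1 - W * (Wᴴ * W)⁻¹ * Wᴴ)ᴴ * (1 - W * (Wᴴ * W)⁻¹ * Wᴴ) := by
      rw [hH, mul_sub, sub_mul, sub_mul, hI]
      simp
    rw [this]
    exact posSemidef_conjTranspose_mul_self _
  have hpd : (1 + Es * W * (Wᴴ * W)⁻¹ * (Es * W)ᴴ).PosDef :=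
    PosDef.one.add_posSemidef (hG.inv.posSemidef.mul_mul_conjTranspose_same _)
  have step2 := det_mono _ _ hpd (hPi.mul_mul_conjTranspose_same Es)
  have hsum2 : 1 + Es * W * (Wᴴ * W)⁻¹ * (Es * W)ᴴ + Es * (1 - W * (Wᴴ * W)⁻¹ * Wᴴ) * Esᴴ =
      diagonal (fun i => ((1 + e i : ℝ) : ℂ)) := by
    have : (diagonal (fun i => ((1 + e i : ℝ) : ℂ)) : Matrix (Fin n) (Fin n) ℂ) = 1 + Es * Es := by
      rw [hEs2, ← diagonal_one, diagonal_add]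
      congr 1
      ext i
      simp
    rw [this, conjTranspose_mul, hEs, mul_sub, sub_mul, mul_one]
    simp only [Matrix.mul_assoc]
    abel
  rw [hsum2, det_diagonal, ← Complex.ofReal_prod] at step2
  rw [← hprod]
  have hc' : (0 : ℂ) ≤ (c : ℂ) ^ Fintype.card {i // p i} * (Wᴴ * W).det :=
    mul_nonneg (pow_nonneg (by exact_mod_cast hc.le) _) hG.det_pos.le
  calc _ = ((c : ℂ) ^ Fintype.card {i // p i} * (Wᴴ * W).det) *
        (1 + Es * W * (Wᴴ * W)⁻¹ * (Es * W)ᴴ).det := by ring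
    _ ≤ _ := mul_le_mul_of_nonneg_left step2 hc'
    _ = _ := by push_cast; ring

/-! ### Simultaneous diagonalization -/

/-- `T` simultaneously reduces `X` to the identity and `Z` to `diag (exp t)`. -/
def RelT {n : ℕ} (X Z : Matrix (Fin n) (Fin n) ℂ) (t : Fin n → ℝ) : Prop :=
  ∃ T : Matrix (Fin n) (Fin n) ℂ, IsUnit T ∧ Tᴴ * X * T = 1 ∧
    Tᴴ * Z * T = diagonal (fun i => ((Real.exp (t i) : ℝ) : ℂ))

lemma eig_perm {n : ℕ} (H : Matrix (Fin n) (Fin n) ℂ) (hH : H.IsHermitian)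
    (Q Q' : Matrix (Fin n) (Fin n) ℂ) (hQ : Q' * Q = 1) (d : Fin n → ℝ)
    (h : H = Q * diagonal (fun i => (d i : ℂ)) * Q') :
    ∃ σ : Equiv.Perm (Fin n), hH.eigenvalues = d ∘ σ := by
  apply perm_of_multiset
  have h1 : H.charpoly = ∏ i, (Polynomial.X - Polynomial.C ((d i : ℂ))) := by
    rw [h, charpoly_mul_comm, ← mul_assoc, hQ, one_mul, charpoly_diagonal]
  have h2 := hH.roots_charpoly_eq_eigenvalues
  have h3 : (∏ i, (Polynomial.X - Polynomial.C ((d i : ℂ)))).roots =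
      Multiset.map (fun i => (d i : ℂ)) Finset.univ.val := by
    rw [Polynomial.roots_prod]
    · simp
    · simp [Finset.prod_ne_zero_iff, Polynomial.X_sub_C_ne_zero]
  rw [h1, h3] at h2
  have h4 := congrArg (Multiset.map Complex.re) h2
  simp only [Multiset.map_map] at h4
  symm
  simpa [Function.comp_def] using h4

lemma conj_submatrix {n : ℕ} {κ : Type*} (T M : Matrix (Fin n) (Fin n) ℂ) (e : κ → Fin n) :
    (T.submatrix id e)ᴴ * M * (T.submatrix id e) = (Tᴴ * M * T).submatrix e e := by
  ext a b
  simp [Matrix.mul_apply]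

lemma matSqrt_spec {n : ℕ} (X : Matrix (Fin n) (Fin n) ℂ) (hX : X.PosDef) :
    (matSqrt X)ᴴ = matSqrt X ∧ matSqrt X * matSqrt X = X ∧ IsUnit (matSqrt X).det := by
  have hs := hX.1.spectral_theorem
  rw [Unitary.conjStarAlgAut_apply] at hs
  have hU : (star hX.1.eigenvectorUnitary : Matrix (Fin n) (Fin n) ℂ) *
    (hX.1.eigenvectorUnitary : Matrix (Fin n) (Fin n) ℂ) = 1 := by simp
  have hdef : matSqrt X = (hX.1.eigenvectorUnitary : Matrix (Fin n) (Fin n) ℂ) *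
      Matrix.diagonal ((↑) ∘ Real.sqrt ∘ hX.1.eigenvalues) *
      (star hX.1.eigenvectorUnitary : Matrix (Fin n) (Fin n) ℂ) := by
    rw [matSqrt, dif_pos hX.posSemidef]
  have hsq : matSqrt X * matSqrt X = X := by
    rw [hdef]
    conv_rhs => rw [hs]
    generalize (hX.1.eigenvectorUnitary : Matrix (Fin n) (Fin n) ℂ) = U at *
    have e1 : ∀ D : Matrix (Fin n) (Fin n) ℂ, U * D * star U * (U * D * star U) =
        U * (D * (star U * U) * D) * star U := by
      intro D; simp only [mul_assoc]
    rw [e1, hU, mul_one, diagonal_mul_diagonal]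
    congr 3
    ext i
    simp only [Function.comp]
    rw [← Complex.ofReal_mul, Real.mul_self_sqrt (hX.posSemidef.eigenvalues_nonneg i)]
    rfl
  refine ⟨?_, hsq, ?_⟩
  · rw [hdef]
    simp only [conjTranspose_mul, star_eq_conjTranspose, conjTranspose_conjTranspose,
      diagonal_conjTranspose, mul_assoc]
    congr 3
    ext i
    simp
  · have : (matSqrt X * matSqrt X).det = X.det := by rw [hsq]
    rw [det_mul] at this
    have hu := (isUnit_iff_isUnit_det X).1 hX.isUnit
    rw [← this] at hu
    exact isUnit_of_mul_isUnit_left hu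

lemma mlog_herm {n : ℕ} (N : Matrix (Fin n) (Fin n) ℂ) : (mlog N).IsHermitian := by
  unfold mlog
  split_ifs with h
  · simp only [IsHermitian, conjTranspose_mul, star_eq_conjTranspose, conjTranspose_conjTranspose,
      diagonal_conjTranspose, mul_assoc]
    congr 3
    ext i
    simp
  · exact isHermitian_zero

lemma dv_eq {n : ℕ} (v : (Fin n → ℝ) → ℝ)
    (hv_perm : ∀ (σ : Equiv.Perm (Fin n)) (x : Fin n → ℝ), v (x ∘ σ) = v x)
    (X Z : Matrix (Fin n) (Fin n) ℂ) (hX : X.PosDef) (hZ : Z.PosDef) (t : Fin n → ℝ)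
    (h : RelT X Z t) : dv v X Z = v t := by
  obtain ⟨T, hT, h1, h2⟩ := h
  obtain ⟨hSh, hSS, hSu⟩ := matSqrt_spec X hX
  unfold dv
  set S := matSqrt X with hS
  have hSih : (S⁻¹)ᴴ = S⁻¹ := by rw [conjTranspose_nonsing_inv, hSh]
  have hN : (S⁻¹ * Z * S⁻¹).IsHermitian := by
    have := hZ.posSemidef.conjTranspose_mul_mul_same S⁻¹
    rw [hSih] at this
    exact this.1
  have hQ : (S * T)ᴴ * (S * T) = 1 := by
    rw [conjTranspose_mul, hSh, ← h1, ← hSS]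
    simp only [mul_assoc]
  have hQ' : (S * T) * (S * T)ᴴ = 1 := mul_eq_one_comm.1 hQ
  have hdiag : (S * T)ᴴ * (S⁻¹ * Z * S⁻¹) * (S * T) =
      diagonal (fun i => ((Real.exp (t i) : ℝ) : ℂ)) := by
    rw [← h2, conjTranspose_mul, hSh]
    calc _ = Tᴴ * (S * S⁻¹) * Z * ((S⁻¹ * S) * T) := by simp only [mul_assoc]
      _ = _ := by rw [mul_nonsing_inv _ hSu, nonsing_inv_mul _ hSu, mul_one, one_mul]
  have hNeq : S⁻¹ * Z * S⁻¹ = (S * T) * diagonal (fun i => ((Real.exp (t i) : ℝ) : ℂ)) * (S * T)ᴴ := by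
    rw [← hdiag]
    calc _ = 1 * (S⁻¹ * Z * S⁻¹) * 1 := by rw [one_mul, mul_one]
      _ = ((S * T) * (S * T)ᴴ) * (S⁻¹ * Z * S⁻¹) * ((S * T) * (S * T)ᴴ) := by rw [hQ']
      _ = _ := by simp only [mul_assoc]
  obtain ⟨σ, hσ⟩ := eig_perm _ hN _ _ hQ (fun i => Real.exp (t i)) hNeq
  have hl := mlog_herm (S⁻¹ * Z * S⁻¹)
  obtain ⟨τ, hτ⟩ := eig_perm _ hl (hN.eigenvectorUnitary : Matrix (Fin n) (Fin n) ℂ)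
      (star hN.eigenvectorUnitary : Matrix (Fin n) (Fin n) ℂ) (by simp)
      (fun i => Real.log (hN.eigenvalues i)) (by rw [mlog, dif_pos hN])
  rw [vnorm, dif_pos hl, hτ, hv_perm, hσ]
  have : (fun i => Real.log (((fun i => Real.exp (t i)) ∘ σ) i)) = t ∘ σ := by
    funext i
    simp
  rw [this, hv_perm]

lemma exists_relT {n : ℕ} (X Z : Matrix (Fin n) (Fin n) ℂ) (hX : X.PosDef) (hZ : Z.PosDef) :
    ∃ t : Fin n → ℝ, Antitone t ∧ RelT X Z t := by
  obtain ⟨hSh, hSS, hSu⟩ := matSqrt_spec X hX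
  set S := matSqrt X with hS
  have hSih : (S⁻¹)ᴴ = S⁻¹ := by rw [conjTranspose_nonsing_inv, hSh]
  have hSi : IsUnit S⁻¹ := by
    rw [isUnit_nonsing_inv_iff, isUnit_iff_isUnit_det]; exact hSu
  have hN : (S⁻¹ * Z * S⁻¹).PosDef := by
    have := hZ.conjTranspose_mul_mul_same (mulVec_injective_of_isUnit hSi)
    rw [hSih] at this
    exact this
  have hs := hN.1.spectral_theorem
  rw [Unitary.conjStarAlgAut_apply] at hs
  have hU : (star hN.1.eigenvectorUnitary : Matrix (Fin n) (Fin n) ℂ) *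
    (hN.1.eigenvectorUnitary : Matrix (Fin n) (Fin n) ℂ) = 1 := by simp
  have hpos := hN.eigenvalues_pos
  generalize (hN.1.eigenvectorUnitary : Matrix (Fin n) (Fin n) ℂ) = U at *
  generalize hN.1.eigenvalues = d at *
  obtain ⟨σ, hσ⟩ := exists_antitone_perm (fun i => Real.log (d i))
  refine ⟨_, hσ, (S⁻¹ * U).submatrix id σ, ?_, ?_, ?_⟩
  · have h1 : IsUnit (S⁻¹ * U) := hSi.mul (IsUnit.of_mul_eq_one_right _ hU)
    rw [isUnit_iff_isUnit_det] at h1 ⊢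
    rw [det_permute']
    refine IsUnit.mul ?_ h1
    rcases Int.units_eq_one_or (Equiv.Perm.sign σ) with h | h <;> simp [h]
  · have : ((S⁻¹ * U)ᴴ * X * (S⁻¹ * U)) = 1 := by
      rw [conjTranspose_mul, hSih, ← hSS]
      calc _ = Uᴴ * (S⁻¹ * S) * (S * S⁻¹) * U := by simp only [mul_assoc]
        _ = _ := by rw [mul_nonsing_inv _ hSu, nonsing_inv_mul _ hSu, mul_one, mul_one]; exact hU
    rw [conj_submatrix, this, submatrix_one _ σ.injective]
  · have : ((S⁻¹ * U)ᴴ * Z * (S⁻¹ * U)) = diagonal (fun i => ((d i : ℝ) : ℂ)) := by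
      rw [conjTranspose_mul, hSih]
      calc _ = Uᴴ * (S⁻¹ * Z * S⁻¹) * U := by simp only [mul_assoc]
        _ = (star U * U) * diagonal (fun i => ((d i : ℝ) : ℂ)) * (star U * U) := by
          rw [hs]; simp only [mul_assoc]; rfl
        _ = _ := by rw [hU, one_mul, mul_one]
    rw [conj_submatrix, this, submatrix_diagonal _ _ σ.injective]
    congr 1
    ext i
    simp only [Function.comp]
    rw [Real.exp_log (hpos _)]

lemma relT_det {n : ℕ} {X Z : Matrix (Fin n) (Fin n) ℂ} {t : Fin n → ℝ} (h : RelT X Z t) :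
    Z.det = ((Real.exp (∑ i, t i) : ℝ) : ℂ) * X.det := by
  obtain ⟨T, hT, h1, h2⟩ := h
  have h3 := congrArg det h1
  have h4 := congrArg det h2
  rw [det_mul, det_mul, det_one] at h3
  rw [det_mul, det_mul, det_diagonal, ← Complex.ofReal_prod, ← Real.exp_sum] at h4
  rw [← h4]
  linear_combination (-Z.det) * h3

lemma relT_le {n : ℕ} {X Z : Matrix (Fin n) (Fin n) ℂ} {t : Fin n → ℝ} (h : RelT X Z t)
    (ht : Antitone t) (j : Fin n) (V : Matrix (Fin n) {i // i ≤ j} ℂ)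
    (hV : Function.Injective V.mulVec) :
    (Vᴴ * Z * V).det ≤ ((Real.exp (∑ i with i ≤ j, t i) : ℝ) : ℂ) * (Vᴴ * X * V).det := by
  obtain ⟨T, hT, h1, h2⟩ := h
  have hTd := (isUnit_iff_isUnit_det T).1 hT
  have hVT : V = T * (T⁻¹ * V) := by
    rw [← Matrix.mul_assoc, mul_nonsing_inv _ hTd, Matrix.one_mul]
  set W := T⁻¹ * V with hW
  have hWi : Function.Injective W.mulVec := by
    intro a b hab
    apply hV
    have h5 : ∀ c, V.mulVec c = T.mulVec (W.mulVec c) := by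
      intro c
      rw [mulVec_mulVec, ← hVT]
    rw [h5, h5, hab]
  have e1 : ∀ M : Matrix (Fin n) (Fin n) ℂ, Vᴴ * M * V = Wᴴ * (Tᴴ * M * T) * W := by
    intro M
    conv_lhs => rw [hVT]
    rw [conjTranspose_mul]
    simp only [Matrix.mul_assoc]
  rw [e1, e1, h1, h2, Matrix.mul_one, Real.exp_sum]
  refine det_le_diag W hWi (fun i => Real.exp (t i)) (fun i => Real.exp_pos _)
    (Real.exp (t j)) (Real.exp_pos _) ?_ ?_
  · intro i hi
    exact Real.exp_le_exp.2 (ht hi)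
  · intro i hi
    exact Real.exp_le_exp.2 (ht (not_le.1 hi).le)

lemma relT_attain {n : ℕ} {X Z : Matrix (Fin n) (Fin n) ℂ} {t : Fin n → ℝ} (h : RelT X Z t)
    (j : Fin n) : ∃ V : Matrix (Fin n) {i // i ≤ j} ℂ, Function.Injective V.mulVec ∧
    (Vᴴ * X * V).det = 1 ∧ (Vᴴ * Z * V).det = ((Real.exp (∑ i with i ≤ j, t i) : ℝ) : ℂ) := by
  obtain ⟨T, hT, h1, h2⟩ := h
  have e1 := fun M => conj_submatrix T M (Subtype.val : {i // i ≤ j} → Fin n)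
  refine ⟨T.submatrix id Subtype.val, ?_, ?_, ?_⟩
  · have h3 := e1 X
    rw [h1, submatrix_one _ Subtype.val_injective] at h3
    intro a b hab
    have h4 := congrArg (((T.submatrix id (Subtype.val : {i // i ≤ j} → Fin n))ᴴ * X).mulVec) hab
    simp only [mulVec_mulVec] at h4
    rw [h3, one_mulVec, one_mulVec] at h4
    exact h4
  · rw [e1, h1, submatrix_one _ Subtype.val_injective, det_one]
  · rw [e1, h2, submatrix_diagonal _ _ Subtype.val_injective, det_diagonal, Real.exp_sum]
    push_cast
    symm
    exact (Finset.prod_subtype _ (by simp) _)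

lemma relT_major {n : ℕ} {X Y Z : Matrix (Fin n) (Fin n) ℂ} (hX : X.PosDef)
    {r s t : Fin n → ℝ} (hr : Antitone r) (hs : Antitone s)
    (hXY : RelT X Y r) (hYZ : RelT Y Z s) (hXZ : RelT X Z t) :
    (∀ j, ∑ i with i ≤ j, t i ≤ ∑ i with i ≤ j, (r + s) i) ∧ ∑ i, t i = ∑ i, (r + s) i := by
  constructor
  · intro j
    obtain ⟨V, hV, h1, h2⟩ := relT_attain hXZ j
    have h3 := relT_le hXY hr j V hV
    have h4 := relT_le hYZ hs j V hV
    rw [h1, mul_one] at h3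
    rw [h2] at h4
    have h5 := h4.trans (mul_le_mul_of_nonneg_left h3 (by exact_mod_cast (Real.exp_pos _).le))
    rw [← Complex.ofReal_mul, ← Real.exp_add, Complex.real_le_real, Real.exp_le_exp] at h5
    simp only [Pi.add_apply, Finset.sum_add_distrib]
    linarith
  · have h1 := relT_det hXY
    have h2 := relT_det hYZ
    have h3 := relT_det hXZ
    rw [h2, h1, ← mul_assoc, ← Complex.ofReal_mul, ← Real.exp_add] at h3
    have h4 := mul_right_cancel₀ hX.det_pos.ne' h3
    have h5 := Real.exp_injective (Complex.ofReal_injective h4)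
    simp only [Pi.add_apply, Finset.sum_add_distrib]
    linarith

lemma relT_symm {n : ℕ} {X Z : Matrix (Fin n) (Fin n) ℂ} {t : Fin n → ℝ} (h : RelT X Z t) :
    RelT Z X (-t) := by
  obtain ⟨T, hT, h1, h2⟩ := h
  let D : Matrix (Fin n) (Fin n) ℂ := diagonal (fun i => ((Real.exp (-(t i)/2) : ℝ) : ℂ))
  have hD : Dᴴ = D := by
    simp only [D, diagonal_conjTranspose]
    congr 1
    ext i
    exact Complex.conj_ofReal _
  have e1 : ∀ M : Matrix (Fin n) (Fin n) ℂ, (T * D)ᴴ * M * (T * D) = D * (Tᴴ * M * T) * D := by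
    intro M
    rw [conjTranspose_mul, hD]
    simp only [mul_assoc]
  refine ⟨T * D, hT.mul ?_, ?_, ?_⟩
  · rw [isUnit_iff_isUnit_det, det_diagonal, isUnit_iff_ne_zero, Finset.prod_ne_zero_iff]
    intro i _
    exact_mod_cast (Real.exp_pos _).ne'
  · rw [e1, h2, diagonal_mul_diagonal, diagonal_mul_diagonal, ← diagonal_one]
    congr 1
    ext i
    rw [← Complex.ofReal_mul, ← Complex.ofReal_mul, ← Real.exp_add, ← Real.exp_add]
    ring_nf
    simp
  · rw [e1, h1, mul_one, diagonal_mul_diagonal]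
    congr 1
    ext i
    rw [← Complex.ofReal_mul, ← Real.exp_add]
    congr 2
    simp only [Pi.neg_apply]
    ring

/-! ### Completeness -/

lemma isClosed_psd {n : ℕ} : IsClosed {M : Matrix (Fin n) (Fin n) ℂ | M.PosSemidef} := by
  have : {M : Matrix (Fin n) (Fin n) ℂ | M.PosSemidef} =
      {M | Mᴴ = M} ∩ ⋂ x : Fin n → ℂ, {M | 0 ≤ star x ⬝ᵥ (M *ᵥ x)} := by
    ext M
    simp [posSemidef_iff_dotProduct_mulVec, IsHermitian]
  rw [this]
  refine IsClosed.inter (isClosed_eq (by fun_prop) continuous_id) (isClosed_iInter fun x => ?_)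
  exact isClosed_le continuous_const (by fun_prop)

/-- `exp (-δ) X ≤ Z ≤ exp δ X` in the Loewner order. -/
def Lo {n : ℕ} (δ : ℝ) (X Z : Matrix (Fin n) (Fin n) ℂ) : Prop :=
  (Z - ((Real.exp (-δ) : ℝ) : ℂ) • X).PosSemidef ∧ (((Real.exp δ : ℝ) : ℂ) • X - Z).PosSemidef

lemma isClosed_Lo {n : ℕ} (δ : ℝ) (X : Matrix (Fin n) (Fin n) ℂ) : IsClosed {Z | Lo δ X Z} := by
  have h1 : IsClosed {Z : Matrix (Fin n) (Fin n) ℂ | (Z - ((Real.exp (-δ) : ℝ) : ℂ) • X).PosSemidef} :=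
    isClosed_psd.preimage (f := fun Z => Z - ((Real.exp (-δ) : ℝ) : ℂ) • X) (by fun_prop)
  have h2 : IsClosed {Z : Matrix (Fin n) (Fin n) ℂ | (((Real.exp δ : ℝ) : ℂ) • X - Z).PosSemidef} :=
    isClosed_psd.preimage (f := fun Z => ((Real.exp δ : ℝ) : ℂ) • X - Z) (by fun_prop)
  exact h1.inter h2

lemma relT_Lo {n : ℕ} {X Z : Matrix (Fin n) (Fin n) ℂ} {t : Fin n → ℝ} (h : RelT X Z t)
    {δ : ℝ} (hδ : 0 ≤ δ) : Lo δ X Z ↔ ‖t‖ ≤ δ := by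
  obtain ⟨T, hT, h1, h2⟩ := h
  have e1 : star T * (Z - ((Real.exp (-δ) : ℝ) : ℂ) • X) * T =
      diagonal (fun i => ((Real.exp (t i) - Real.exp (-δ) : ℝ) : ℂ)) := by
    rw [star_eq_conjTranspose, mul_sub, sub_mul, h2, mul_smul_comm, smul_mul_assoc, h1,
      ← diagonal_one, ← diagonal_smul, diagonal_sub]
    congr 1
    ext i
    simp
  have e2 : star T * (((Real.exp δ : ℝ) : ℂ) • X - Z) * T =
      diagonal (fun i => ((Real.exp δ - Real.exp (t i) : ℝ) : ℂ)) := by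
    rw [star_eq_conjTranspose, mul_sub, sub_mul, h2, mul_smul_comm, smul_mul_assoc, h1,
      ← diagonal_one, ← diagonal_smul, diagonal_sub]
    congr 1
    ext i
    simp
  rw [Lo, ← IsUnit.posSemidef_star_left_conjugate_iff hT (x := Z - _), e1,
    ← IsUnit.posSemidef_star_left_conjugate_iff hT (x := _ - Z), e2, posSemidef_diagonal_iff,
    posSemidef_diagonal_iff, pi_norm_le_iff_of_nonneg hδ, ← forall_and]
  refine forall_congr' fun i => ?_
  rw [Complex.zero_le_real, Complex.zero_le_real, sub_nonneg, sub_nonneg, Real.exp_le_exp,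
    Real.exp_le_exp, Real.norm_eq_abs, abs_le]

open scoped MatrixOrder Matrix.Norms.L2Operator in
lemma exists_subseq {n : ℕ} (X : Matrix (Fin n) (Fin n) ℂ) (u : ℕ → Matrix (Fin n) (Fin n) ℂ)
    (hu : ∀ k, (u k).PosDef) (h : ∀ k, Lo 1 X (u k)) :
    ∃ L : Matrix (Fin n) (Fin n) ℂ, ∃ φ : ℕ → ℕ, StrictMono φ ∧
      Filter.Tendsto (u ∘ φ) Filter.atTop (nhds L) := by
  have hb : ∀ k, ‖u k‖ ≤ ‖((Real.exp 1 : ℝ) : ℂ) • X‖ := fun k =>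
    CStarAlgebra.norm_le_norm_of_nonneg_of_le (hu k).posSemidef.nonneg
      (Matrix.le_iff.2 (h k).2)
  have : ProperSpace (Matrix (Fin n) (Fin n) ℂ) := FiniteDimensional.proper ℂ _
  obtain ⟨L, -, φ, hφ, hL⟩ := tendsto_subseq_of_bounded
    (Metric.isBounded_closedBall (x := (0 : Matrix (Fin n) (Fin n) ℂ))
      (r := ‖((Real.exp 1 : ℝ) : ℂ) • X‖)) (x := u) (fun k => by simpa using hb k)
  exact ⟨L, φ, hφ, hL⟩

/-- `d_v` is a complete metric on the set of positive definite matrices, invariant in the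
sense that `d_v(X,Y) = d_v(I, X^{-1/2} Y X^{-1/2})`. -/
theorem dv_is_complete_metric {n : ℕ} (v : (Fin n → ℝ) → ℝ)
    (hv_eq0 : ∀ x, v x = 0 ↔ x = 0)
    (hv_smul : ∀ (c : ℝ) (x : Fin n → ℝ), v (c • x) = |c| * v x)
    (hv_add : ∀ x y, v (x + y) ≤ v x + v y)
    (hv_perm : ∀ (σ : Equiv.Perm (Fin n)) (x : Fin n → ℝ), v (x ∘ σ) = v x) :
    (∀ X Y : Matrix (Fin n) (Fin n) ℂ, X.PosDef → Y.PosDef → (dv v X Y = 0 ↔ X = Y))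
      ∧ (∀ X Y : Matrix (Fin n) (Fin n) ℂ, X.PosDef → Y.PosDef → dv v X Y = dv v Y X)
      ∧ (∀ X Y Z : Matrix (Fin n) (Fin n) ℂ, X.PosDef → Y.PosDef → Z.PosDef →
          dv v X Z ≤ dv v X Y + dv v Y Z)
      ∧ (∀ u : ℕ → Matrix (Fin n) (Fin n) ℂ, (∀ k, (u k).PosDef) →
          (∀ ε > (0 : ℝ), ∃ N, ∀ p ≥ N, ∀ q ≥ N, dv v (u p) (u q) < ε) →
          ∃ L : Matrix (Fin n) (Fin n) ℂ, L.PosDef ∧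
            ∀ ε > (0 : ℝ), ∃ N, ∀ k ≥ N, dv v (u k) L < ε)
      ∧ (∀ X Y : Matrix (Fin n) (Fin n) ℂ, X.PosDef → Y.PosDef →
          dv v X Y = dv v 1 ((matSqrt X)⁻¹ * Y * (matSqrt X)⁻¹)) := by
  have hrel := fun (X Z : Matrix (Fin n) (Fin n) ℂ) hX hZ => exists_relT X Z hX hZ
  have hdv := dv_eq v hv_perm
  refine ⟨?_, ?_, ?_, ?_, ?_⟩
  · intro X Y hX hY
    obtain ⟨t, -, ht⟩ := hrel X Y hX hY
    rw [hdv X Y hX hY t ht, hv_eq0]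
    constructor
    · rintro rfl
      obtain ⟨T, hT, h1, h2⟩ := ht
      have h3 : Tᴴ * X * T = Tᴴ * Y * T := by
        rw [h1, h2]
        simp
      have hT' : IsUnit Tᴴ := by
        rw [← star_eq_conjTranspose]; exact hT.star
      exact hT'.mul_left_cancel (hT.mul_right_cancel h3)
    · rintro rfl
      have h0 : Lo 0 X X := by simp [Lo, PosSemidef.zero]
      have := (relT_Lo ht le_rfl).1 h0
      exact norm_le_zero_iff.1 this
  · intro X Y hX hY
    obtain ⟨t, -, ht⟩ := hrel X Y hX hY
    rw [hdv X Y hX hY t ht, hdv Y X hY hX _ (relT_symm ht)]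
    have := hv_smul (-1) t
    simpa using this.symm
  · intro X Y Z hX hY hZ
    obtain ⟨r, hr, hXY⟩ := hrel X Y hX hY
    obtain ⟨s, hs, hYZ⟩ := hrel Y Z hY hZ
    obtain ⟨t, ht, hXZ⟩ := hrel X Z hX hZ
    rw [hdv X Y hX hY r hXY, hdv Y Z hY hZ s hYZ, hdv X Z hX hZ t hXZ]
    obtain ⟨h1, h2⟩ := relT_major hX hr hs hXY hYZ hXZ
    exact (v_major v hv_smul hv_add hv_perm t (r + s) ht h1 h2).trans (hv_add r s)
  · intro u hu hC
    obtain ⟨C, hCpos, hC1, hC2⟩ := v_bounds v hv_eq0 hv_smul hv_add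
    have hLo : ∀ δ > (0 : ℝ), ∃ N, ∀ p ≥ N, ∀ q ≥ N, Lo δ (u p) (u q) := by
      intro δ hδ
      obtain ⟨N, hN⟩ := hC (δ / C) (by positivity)
      refine ⟨N, fun p hp q hq => ?_⟩
      obtain ⟨t, -, ht⟩ := hrel _ _ (hu p) (hu q)
      have h1 := hN p hp q hq
      rw [hdv _ _ (hu p) (hu q) t ht, lt_div_iff₀ hCpos] at h1
      rw [relT_Lo ht hδ.le]
      have := hC2 t
      linarith
    obtain ⟨M, hM⟩ := hLo 1 one_pos
    obtain ⟨L, φ, hφ, hL⟩ := exists_subseq (u M) (fun k => u (M + k)) (fun k => hu _)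
      (fun k => hM M le_rfl _ (by omega))
    have hlim : ∀ δ > (0 : ℝ), ∃ N, ∀ p ≥ N, Lo δ (u p) L := by
      intro δ hδ
      obtain ⟨N, hN⟩ := hLo δ hδ
      refine ⟨N, fun p hp => ?_⟩
      refine (isClosed_Lo δ (u p)).mem_of_tendsto hL ?_
      filter_upwards [Filter.eventually_ge_atTop N] with k hk
      have := hφ.id_le k
      exact hN p hp _ (by simp at this; omega)
    have hLpd : L.PosDef := by
      obtain ⟨N, hN⟩ := hlim 1 one_pos
      have h1 := (hN N le_rfl).1
      have h2 : (((Real.exp (-1) : ℝ) : ℂ) • u N).PosDef :=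
        (hu N).smul (by exact_mod_cast Real.exp_pos _)
      have := h2.add_posSemidef h1
      simpa using this
    refine ⟨L, hLpd, fun ε hε => ?_⟩
    obtain ⟨N, hN⟩ := hlim (ε / (2 * C)) (by positivity)
    refine ⟨N, fun k hk => ?_⟩
    obtain ⟨t, -, ht⟩ := hrel _ _ (hu k) hLpd
    rw [hdv _ _ (hu k) hLpd t ht]
    have h1 := (relT_Lo ht (by positivity)).1 (hN k hk)
    calc v t ≤ C * ‖t‖ := hC1 t
      _ ≤ C * (ε / (2 * C)) := by gcongr
      _ = ε / 2 := by field_simp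
      _ < ε := by linarith
  · intro X Y hX hY
    obtain ⟨hSh, hSS, hSu⟩ := matSqrt_spec X hX
    obtain ⟨t, -, ht⟩ := hrel X Y hX hY
    rw [hdv X Y hX hY t ht]
    set S := matSqrt X with hS
    have hSih : (S⁻¹)ᴴ = S⁻¹ := by rw [conjTranspose_nonsing_inv, hSh]
    have hSi : IsUnit S⁻¹ := by
      rw [isUnit_nonsing_inv_iff, isUnit_iff_isUnit_det]; exact hSu
    have hN : (S⁻¹ * Y * S⁻¹).PosDef := by
      have := hY.conjTranspose_mul_mul_same (mulVec_injective_of_isUnit hSi)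
      rw [hSih] at this
      exact this
    symm
    refine hdv 1 _ PosDef.one hN t ?_
    obtain ⟨T, hT, h1, h2⟩ := ht
    refine ⟨S * T, ((isUnit_iff_isUnit_det S).2 hSu).mul hT, ?_, ?_⟩
    · rw [mul_one, ← h1, conjTranspose_mul, hSh, ← hSS]
      simp only [mul_assoc]
    · rw [← h2, conjTranspose_mul, hSh]
      calc _ = Tᴴ * (S * S⁻¹) * Y * ((S⁻¹ * S) * T) := by simp only [mul_assoc]
        _ = _ := by rw [mul_nonsing_inv _ hSu, nonsing_inv_mul _ hSu, mul_one, one_mul]
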